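/- arXiv:1609.07601 — 2 statements merged into one kernel-verified Lean document; each statement's English description precedes it below -/
import Mathlib

section
/- Let d ≥ 2, let G : (0,∞) → ℝ be C² with G''(s) > 0 for all s > 0, lim_{s→0⁺} G'(s) = 0 and lim_{s→∞} G'(s) = 1, and set a_G(s) := G'(s)/s. For r₀ > 0 and δ ∈ (0,1) define b(r) := (G')^{-1}((1−δ)^{d−1} r₀^{d−1}/r^{d−1}) for r ≥ r₀ and ω(x) := ∫_{r₀}^{|x|} b(r) dr. Then for every x with |x| > r₀ such that a_G'(b(|x|)) ≤ 0, one has Δω(x) ≤ 0, i.e. ω is super-harmonic at such points. -/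
open Set Filter Topology MeasureTheory

/-- Pointwise divergence of a vector field on `ℝ^d`: the sum of the partial derivatives of
its components. -/
noncomputable def diver {d : ℕ} (X : EuclideanSpace ℝ (Fin d) → EuclideanSpace ℝ (Fin d))
    (x : EuclideanSpace ℝ (Fin d)) : ℝ :=
  ∑ i, fderiv ℝ (fun y => X y i) x (EuclideanSpace.single i 1)

/-- Away from the origin, the norm of a real inner product space is differentiable, with gradient
the unit radial vector. -/
theorem hasFDerivAt_norm_of_ne_zero {E : Type*} [NormedAddCommGroup E] [InnerProductSpace ℝ E]
    {x : E} (hx : x ≠ 0) :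
    HasFDerivAt (fun y : E => ‖y‖) (‖x‖⁻¹ • innerSL ℝ x) x := by
  have hpos : 0 < ‖x‖ := norm_pos_iff.mpr hx
  have h := (hasStrictFDerivAt_norm_sq x).hasFDerivAt.sqrt (by positivity)
  simp only [Real.sqrt_sq (norm_nonneg _)] at h
  convert h using 1
  ext v
  simp
  field_simp

/-- The gradient of a radial function `y ↦ f ‖y‖`. -/
theorem hasGradientAt_comp_norm {E : Type*} [NormedAddCommGroup E] [InnerProductSpace ℝ E]
    [CompleteSpace E] {f : ℝ → ℝ} {f' : ℝ} {x : E} (hx : x ≠ 0) (hf : HasDerivAt f f' ‖x‖) :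
    HasGradientAt (fun y : E => f ‖y‖) ((f' / ‖x‖) • x) x := by
  rw [hasGradientAt_iff_hasFDerivAt]
  refine (hf.comp_hasFDerivAt x (hasFDerivAt_norm_of_ne_zero hx)).congr_fderiv ?_
  ext v
  simp [div_eq_mul_inv, mul_assoc]

/-- The divergence depends only on the germ of the vector field. -/
theorem Filter.EventuallyEq.diver_eq {d : ℕ}
    {X Y : EuclideanSpace ℝ (Fin d) → EuclideanSpace ℝ (Fin d)} {x : EuclideanSpace ℝ (Fin d)}
    (h : X =ᶠ[𝓝 x] Y) : diver X x = diver Y x := by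
  refine Finset.sum_congr rfl fun i _ => ?_
  have hi : (fun y => X y i) =ᶠ[𝓝 x] fun y => Y y i := h.mono fun y hy => by simp only [hy]
  rw [hi.fderiv_eq]

/-- The divergence of a radial vector field `y ↦ φ ‖y‖ • y`. -/
theorem diver_radial {d : ℕ} {φ : ℝ → ℝ} {φ' : ℝ} {x : EuclideanSpace ℝ (Fin d)} (hx : x ≠ 0)
    (hφ : HasDerivAt φ φ' ‖x‖) :
    diver (fun y => φ ‖y‖ • y) x = φ' * ‖x‖ + d * φ ‖x‖ := by
  have hpos : 0 < ‖x‖ := norm_pos_iff.mpr hx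
  have hterm (i : Fin d) :
      fderiv ℝ (fun y : EuclideanSpace ℝ (Fin d) => (φ ‖y‖ • y) i) x (EuclideanSpace.single i 1)
        = φ' / ‖x‖ * x i ^ 2 + φ ‖x‖ := by
    have h1 := hφ.comp_hasFDerivAt x (hasFDerivAt_norm_of_ne_zero hx)
    have h2 : HasFDerivAt (fun y : EuclideanSpace ℝ (Fin d) => y i)
        (EuclideanSpace.proj i : EuclideanSpace ℝ (Fin d) →L[ℝ] ℝ) x :=
      (EuclideanSpace.proj i : EuclideanSpace ℝ (Fin d) →L[ℝ] ℝ).hasFDerivAt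
    have h3 := (h1.mul h2).fderiv
    have hfun : (fun y : EuclideanSpace ℝ (Fin d) => (φ ‖y‖ • y) i)
        = (φ ∘ fun y => ‖y‖) * fun y : EuclideanSpace ℝ (Fin d) => y i := by
      ext y; simp
    rw [hfun, h3]
    simp [EuclideanSpace.inner_single_right]
    ring
  have hsum : ∑ i, x i ^ 2 = ‖x‖ ^ 2 := by
    simp [EuclideanSpace.norm_sq_eq]
  simp only [diver, hterm, Finset.sum_add_distrib, ← Finset.mul_sum, hsum]
  simp
  field_simp

/-- The Laplacian of the radial function `y ↦ f ‖y‖` is `f'' + (d - 1) f' / ‖x‖`. -/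
theorem diver_gradient_comp_norm {d : ℕ} {f f' : ℝ → ℝ} {f'' : ℝ} {x : EuclideanSpace ℝ (Fin d)}
    (hx : x ≠ 0) (hf : ∀ᶠ r in 𝓝 ‖x‖, HasDerivAt f (f' r) r) (hf' : HasDerivAt f' f'' ‖x‖) :
    diver (gradient fun y => f ‖y‖) x = f'' + (d - 1) * f' ‖x‖ / ‖x‖ := by
  have hpos : 0 < ‖x‖ := norm_pos_iff.mpr hx
  have hgrad : gradient (fun y => f ‖y‖) =ᶠ[𝓝 x] fun y => (f' ‖y‖ / ‖y‖) • y := by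
    filter_upwards [continuous_norm.continuousAt.eventually hf, isOpen_ne.mem_nhds hx]
      with y hy hy0
    exact (hasGradientAt_comp_norm hy0 hy).gradient
  rw [hgrad.diver_eq, diver_radial (φ := fun r => f' r / r) hx (hf'.div (hasDerivAt_id _) hpos.ne')]
  field_simp
  ring

/-- For the radial prototype barrier `ω(x) = ∫_{r₀}^{|x|} b(r) dr` with
`b(r) = (G')⁻¹((1−δ)^{d−1} r₀^{d−1}/r^{d−1})`: at every point `x` with `|x| > r₀` where
`a_G'(b(|x|)) ≤ 0`, one has `Δω(x) ≤ 0`, i.e. `ω` is super-harmonic there. -/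
theorem stmt_13
    (d : ℕ) (hd : 2 ≤ d)
    (G G' G'' : ℝ → ℝ)
    (hder1 : ∀ s ∈ Ioi (0:ℝ), HasDerivAt G (G' s) s)
    (hder2 : ∀ s ∈ Ioi (0:ℝ), HasDerivAt G' (G'' s) s)
    (hG''cont : ContinuousOn G'' (Ioi 0))
    (hG''pos : ∀ s ∈ Ioi (0:ℝ), 0 < G'' s)
    (hG'0 : Tendsto G' (nhdsWithin 0 (Ioi 0)) (nhds 0))
    (hG'1 : Tendsto G' atTop (nhds 1))
    (Ginv : ℝ → ℝ) (hGinv0 : Ginv 0 = 0)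
    (hGinv : ∀ s ∈ Ioi (0:ℝ), Ginv (G' s) = s)
    (hGinv' : ∀ y ∈ Ioo (0:ℝ) 1, G' (Ginv y) = y ∧ 0 < Ginv y)
    (hGinvmono : StrictMonoOn Ginv (Ico 0 1)) (hGinvcont : ContinuousOn Ginv (Ico 0 1))
    (r₀ δ : ℝ) (hr₀ : 0 < r₀) (hδ : δ ∈ Ioo (0:ℝ) 1)
    (aG b : ℝ → ℝ) (ω : EuclideanSpace ℝ (Fin d) → ℝ)
    (haG : ∀ s, aG s = G' s / s)
    (hb : ∀ r, b r = Ginv ((1 - δ) ^ (d - 1) * r₀ ^ (d - 1) / r ^ (d - 1)))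
    (hω : ∀ x : EuclideanSpace ℝ (Fin d), ω x = ∫ r in r₀..‖x‖, b r) :
    ∀ x : EuclideanSpace ℝ (Fin d), r₀ < ‖x‖ → deriv aG (b ‖x‖) ≤ 0 →
      diver (gradient ω) x ≤ 0 := by
  intro x hx haG'
  have hxpos : 0 < ‖x‖ := hr₀.trans hx
  have hx0 : x ≠ 0 := norm_pos_iff.mp hxpos
  have hd1 : d - 1 ≠ 0 := by omega
  set c : ℝ := (1 - δ) ^ (d - 1) * r₀ ^ (d - 1)
  have hδ' : 0 < 1 - δ := sub_pos.mpr hδ.2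
  have hcpos : 0 < c := by positivity
  have harg (r : ℝ) (hr : r₀ ≤ r) : c / r ^ (d - 1) ∈ Ioo (0 : ℝ) 1 := by
    have hrpos : 0 < r := hr₀.trans_le hr
    refine ⟨by positivity, (div_lt_one (by positivity)).mpr ?_⟩
    calc c < 1 * r₀ ^ (d - 1) :=
          mul_lt_mul_of_pos_right (pow_lt_one₀ hδ'.le (by linarith [hδ.1]) hd1) (by positivity)
      _ ≤ r ^ (d - 1) := by rw [one_mul]; exact pow_le_pow_left₀ hr₀.le hr _
  have hbG (r : ℝ) (hr : r₀ ≤ r) : G' (b r) = c / r ^ (d - 1) ∧ 0 < b r := by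
    rw [hb]; exact hGinv' _ (harg r hr)
  have hbderiv (r : ℝ) (hr : r₀ ≤ r) :
      HasDerivAt b (-((d - 1) * G' (b r) / (r * G'' (b r)))) r := by
    have hrpos : 0 < r := hr₀.trans_le hr
    have hbpos := (hbG r hr).2
    have hG''b := hG''pos _ hbpos
    have hinv : HasDerivAt Ginv (G'' (b r))⁻¹ (c / r ^ (d - 1)) := by
      refine HasDerivAt.of_local_left_inverse (f := G')
        (hGinvcont.continuousAt (Ico_mem_nhds (harg r hr).1 (harg r hr).2)) ?_ hG''b.ne' ?_
      · rw [← hb]; exact hder2 _ hbpos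
      · filter_upwards [Ioo_mem_nhds (harg r hr).1 (harg r hr).2] with y hy using (hGinv' y hy).1
    have hquot : HasDerivAt (fun r : ℝ => c / r ^ (d - 1))
        (-((d - 1) * (c / r ^ (d - 1)) / r)) r := by
      refine ((hasDerivAt_const r c).div (hasDerivAt_pow (d - 1) r)
        (by positivity)).congr_deriv ?_
      obtain ⟨n, rfl⟩ : ∃ n, d = n + 2 := ⟨d - 2, by omega⟩
      simp only [show n + 2 - 1 = n + 1 from rfl, Nat.add_sub_cancel]
      push_cast
      field_simp
      ring
    have hcomp := hinv.comp r hquot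
    rw [(hbG r hr).1]
    refine (hcomp.congr_of_eventuallyEq (.of_forall hb)).congr_deriv ?_
    field_simp
  have hbcont : ContinuousOn b (Ici r₀) := fun r hr =>
    (hbderiv r hr).continuousAt.continuousWithinAt
  have hint : ∀ᶠ r in 𝓝 ‖x‖, HasDerivAt (fun t => ∫ s in r₀..t, b s) (b r) r := by
    filter_upwards [Ioi_mem_nhds hx] with r hr
    refine intervalIntegral.integral_hasDerivAt_right
      ((hbcont.mono ?_).intervalIntegrable) ?_ (hbderiv r (le_of_lt hr)).continuousAt
    · rw [uIcc_of_le (le_of_lt hr)]; exact Icc_subset_Ici_self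
    · exact (hbcont.mono Ioi_subset_Ici_self).stronglyMeasurableAtFilter isOpen_Ioi r hr
  have hle := hx.le
  have hbpos := (hbG _ hle).2
  have hG''b := hG''pos _ hbpos
  rw [funext hω, diver_gradient_comp_norm hx0 hint (hbderiv _ hle)]
  have haGderiv := (hder2 _ hbpos).div (hasDerivAt_id _) hbpos.ne'
  rw [show aG = G' / id from funext haG, haGderiv.deriv,
    div_le_iff₀ (by simpa using pow_pos hbpos 2)] at haG'
  have hkey : b ‖x‖ * G'' (b ‖x‖) ≤ G' (b ‖x‖) := by
    simp only [id] at haG'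
    linarith
  have hdpos : (0 : ℝ) ≤ d - 1 := by
    have : (2 : ℝ) ≤ d := by exact_mod_cast hd
    linarith
  have hbound : b ‖x‖ ≤ G' (b ‖x‖) / G'' (b ‖x‖) := (le_div_iff₀ hG''b).mpr hkey
  calc -((d - 1) * G' (b ‖x‖) / (‖x‖ * G'' (b ‖x‖))) + (d - 1) * b ‖x‖ / ‖x‖
      = (d - 1) / ‖x‖ * (b ‖x‖ - G' (b ‖x‖) / G'' (b ‖x‖)) := by field_simp; ring
    _ ≤ 0 := mul_nonpos_of_nonneg_of_nonpos (by positivity) (by linarith)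
end

section
/- Let d ≥ 2 and let G : (0,∞) → ℝ be C² with G''(s) > 0 for all s > 0, lim_{s→0⁺} G'(s) = 0, lim_{s→∞} G'(s) = 1, and ∫₁^∞ t G''(t) dt = ∞. Then for every r₀ > 0, every η > 0 and every real number C there exists δ ∈ (0,1) such that ∫_{r₀}^{r₀+η} (G')^{-1}((1−δ)^{d−1} r₀^{d−1}/r^{d−1}) dr ≥ C; equivalently, the supremum over δ ∈ (0,1) of these integrals is infinite. -/
open Set Filter Topology MeasureTheory

/-- A differentiable function on `(0, ∞)` with positive derivative is strictly increasing there. -/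
theorem strictMonoOn_Ioi_of_hasDerivAt_pos {f f' : ℝ → ℝ}
    (hf : ∀ s ∈ Ioi (0 : ℝ), HasDerivAt f (f' s) s) (hpos : ∀ s ∈ Ioi (0 : ℝ), 0 < f' s) :
    StrictMonoOn f (Ioi 0) := by
  refine strictMonoOn_of_deriv_pos (convex_Ioi 0)
    (fun s hs => (hf s hs).continuousAt.continuousWithinAt) fun s hs => ?_
  rw [interior_Ioi] at hs
  rw [(hf s hs).deriv]
  exact hpos s hs

/-- A strictly increasing function on `(0, ∞)` lies strictly between its limits at `0` and `∞`. -/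
theorem StrictMonoOn.mem_Ioo_of_tendsto {f : ℝ → ℝ} {a b : ℝ} (hf : StrictMonoOn f (Ioi 0))
    (h0 : Tendsto f (𝓝[>] 0) (𝓝 a)) (h1 : Tendsto f atTop (𝓝 b)) {s : ℝ} (hs : 0 < s) :
    f s ∈ Ioo a b := by
  constructor
  · have h : a ≤ f (s / 2) := by
      refine le_of_tendsto h0 ?_
      filter_upwards [Ioo_mem_nhdsGT (half_pos hs)] with u hu
      exact hf.monotoneOn hu.1 (half_pos hs) hu.2.le
    exact h.trans_lt (hf (half_pos hs) hs (half_lt_self hs))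
  · have h : f (s + 1) ≤ b := by
      refine ge_of_tendsto h1 ?_
      filter_upwards [eventually_ge_atTop (s + 1)] with u hu
      have hs1 : (0 : ℝ) < s + 1 := by linarith
      exact hf.monotoneOn hs1 (hs1.trans_le hu) hu
    exact (hf hs (show (0 : ℝ) < s + 1 by linarith) (lt_add_one s)).trans_le h

/-- If a nonnegative continuous function on `(0, ∞)` has infinite integral over `(1, ∞)`, its
integrals over `[S, T]` are unbounded in `T`. -/
theorem exists_le_intervalIntegral_of_lintegral_eq_top {f : ℝ → ℝ}
    (hf : ContinuousOn f (Ioi 0)) (hpos : ∀ t ∈ Ioi (0 : ℝ), 0 ≤ f t)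
    (htop : (∫⁻ t in Ioi (1 : ℝ), ENNReal.ofReal (f t)) = ⊤) {S : ℝ} (hS : 0 < S) (M : ℝ) :
    ∃ T, S < T ∧ M ≤ ∫ t in S..T, f t := by
  by_contra! h
  have hIcc : ∀ {a : ℝ} (b : ℝ), 0 < a → IntegrableOn f (Icc a b) := fun b ha =>
    (hf.mono fun t ht => ha.trans_le ht.1).integrableOn_Icc
  have hIoi : IntegrableOn f (Ioi S) := by
    refine integrableOn_Ioi_of_intervalIntegral_norm_bounded M S
      (fun T : ℝ => (hIcc T hS).mono_set Ioc_subset_Icc_self) tendsto_id ?_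
    filter_upwards [eventually_gt_atTop S] with T hT
    refine le_of_eq_of_le ?_ (h T hT).le
    refine intervalIntegral.integral_congr fun t ht => ?_
    rw [uIcc_of_le hT.le] at ht
    exact Real.norm_of_nonneg (hpos t (hS.trans_le ht.1))
  have hIoi_one : IntegrableOn f (Ioi 1) := by
    refine ((hIcc S one_pos).union hIoi).mono_set fun t ht => ?_
    rcases le_or_gt t S with hts | hts
    · exact Or.inl ⟨le_of_lt ht, hts⟩
    · exact Or.inr hts
  exact hIoi_one.lintegral_lt_top.ne htop

/-- Bernoulli's inequality for the powers of `a / r`. -/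
theorem one_sub_mul_div_le_div_pow {a r : ℝ} (ha : 0 < a) (har : a ≤ r) (n : ℕ) :
    1 - n * ((r - a) / a) ≤ (a / r) ^ n := by
  have hr : 0 < r := ha.trans_le har
  have hq : 0 < a / r := div_pos ha hr
  have h := one_add_mul_le_pow (a := a / r - 1) (by linarith) n
  rw [add_sub_cancel] at h
  refine le_trans ?_ h
  have h1 : (r - a) / r ≤ (r - a) / a :=
    div_le_div_of_nonneg_left (sub_nonneg.2 har) ha har
  have h2 : (r - a) / r = 1 - a / r := by field_simp
  nlinarith [Nat.cast_nonneg (α := ℝ) n]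

/-- Substituting the affine minorant of `r ↦ q (r₀ / r) ^ n` bounds the integral of `g` along that
function from below by an integral of `g` itself. -/
theorem mul_integral_le_integral_comp_div_pow {g : ℝ → ℝ} (hmono : MonotoneOn g (Ico 0 1))
    (hcont : ContinuousOn g (Ico 0 1)) (hg0 : 0 ≤ g 0) {n : ℕ} (hn : 0 < n) {r₀ η κ q : ℝ}
    (hr₀ : 0 < r₀) (hκ : 0 < κ) (hκ1 : κ < 1) (hκη : r₀ * κ / n ≤ η) (hq : 1 - κ ≤ q)
    (hq1 : q < 1) :
    r₀ / n * ∫ y in (1 - κ)..q, g y ≤ ∫ r in r₀..(r₀ + η), g (q * r₀ ^ n / r ^ n) := by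
  have hn' : (0 : ℝ) < n := Nat.cast_pos.2 hn
  have hq0 : 0 < q := by linarith
  have hnonneg : ∀ y ∈ Ico (0 : ℝ) 1, 0 ≤ g y := fun y hy =>
    hg0.trans (hmono ⟨le_rfl, one_pos⟩ hy hy.1)
  set ρ := r₀ * κ / n with hρ
  have hρ0 : 0 < ρ := by positivity
  have hmem : ∀ r, r₀ ≤ r → q * r₀ ^ n / r ^ n ∈ Ico (0 : ℝ) 1 := fun r hr => by
    have hr' : 0 < r := hr₀.trans_le hr
    refine ⟨by positivity, ?_⟩
    rw [div_lt_one (by positivity)]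
    have h1 : r₀ ^ n ≤ r ^ n := by gcongr
    have h2 : 0 < r₀ ^ n := by positivity
    nlinarith
  have hintegrable : ∀ b, r₀ ≤ b →
      IntervalIntegrable (fun r => g (q * r₀ ^ n / r ^ n)) volume r₀ b := fun b hb => by
    refine ContinuousOn.intervalIntegrable ?_
    rw [uIcc_of_le hb]
    refine hcont.comp (continuousOn_const.div (by fun_prop) fun r hr => ?_) fun r hr => hmem r hr.1
    exact pow_ne_zero _ (hr₀.trans_le hr.1).ne'
  have hlin : ∀ r ∈ Icc r₀ (r₀ + ρ), q * (1 + n) - q * n / r₀ * r ∈ Ico (0 : ℝ) 1 := fun r hr => by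
    have h1 : q * (1 + n) - q * n / r₀ * r = q * (1 - n * ((r - r₀) / r₀)) := by
      field_simp
      ring
    have h2 : n * ((r - r₀) / r₀) ≤ κ := by
      calc n * ((r - r₀) / r₀) ≤ n * (ρ / r₀) := by
            gcongr
            linarith [hr.2]
        _ = κ := by rw [hρ]; field_simp
    have h3 : 0 ≤ n * ((r - r₀) / r₀) :=
      mul_nonneg hn'.le (div_nonneg (sub_nonneg.2 hr.1) hr₀.le)
    rw [h1]
    constructor <;> nlinarith
  have hgint : ∀ a b, 0 ≤ a → a ≤ b → b < 1 → IntervalIntegrable g volume a b :=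
    fun a b ha hab hb => by
      refine ContinuousOn.intervalIntegrable (hcont.mono ?_)
      rw [uIcc_of_le hab]
      exact fun y hy => ⟨ha.trans hy.1, hy.2.trans_lt hb⟩
  have hqκ : q * (1 - κ) ≤ 1 - κ := by nlinarith
  have hqκ0 : 0 ≤ q * (1 - κ) := mul_nonneg hq0.le (by linarith)
  calc r₀ / n * ∫ y in (1 - κ)..q, g y
      ≤ (q * n / r₀)⁻¹ * ∫ y in (q * (1 - κ))..q, g y := by
        refine mul_le_mul ?_ ?_ ?_ (by positivity)
        · rw [inv_div]
          gcongr
          nlinarith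
        · refine intervalIntegral.integral_mono_interval hqκ hq le_rfl ?_
            (hgint _ _ hqκ0 (by linarith) hq1)
          filter_upwards [ae_restrict_mem measurableSet_Ioc] with y hy
          exact hnonneg y ⟨hqκ0.trans hy.1.le, hy.2.trans_lt hq1⟩
        · exact intervalIntegral.integral_nonneg hq fun y hy =>
            hnonneg y ⟨by linarith [hy.1], hy.2.trans_lt hq1⟩
    _ = ∫ r in r₀..(r₀ + ρ), g (q * (1 + n) - q * n / r₀ * r) := by
        rw [intervalIntegral.integral_comp_sub_mul g (by positivity), smul_eq_mul]
        congr 2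
        · rw [hρ]
          field_simp
          ring
        · field_simp
          ring
    _ ≤ ∫ r in r₀..(r₀ + ρ), g (q * r₀ ^ n / r ^ n) := by
        refine intervalIntegral.integral_mono_on (by linarith) ?_ (hintegrable _ (by linarith))
          fun r hr => hmono (hlin r hr) (hmem r hr.1) ?_
        · refine ContinuousOn.intervalIntegrable ?_
          rw [uIcc_of_le (by linarith)]
          exact hcont.comp (by fun_prop) hlin
        · calc q * (1 + n) - q * n / r₀ * r = q * (1 - n * ((r - r₀) / r₀)) := by
                field_simp
                ring
            _ ≤ q * (r₀ / r) ^ n := by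
                gcongr
                exact one_sub_mul_div_le_div_pow hr₀ hr.1 n
            _ = q * r₀ ^ n / r ^ n := by rw [div_pow, mul_div_assoc]
    _ ≤ ∫ r in r₀..(r₀ + η), g (q * r₀ ^ n / r ^ n) := by
        refine intervalIntegral.integral_mono_interval le_rfl (by linarith) (by linarith) ?_
          (hintegrable _ (by linarith))
        filter_upwards [ae_restrict_mem measurableSet_Ioc] with r hr
        exact hnonneg _ (hmem r hr.1.le)

/-- If `G` is a normalized strictly convex linear-growth integrand with
`∫₁^∞ t G''(t) dt = ∞`, then for every `r₀ > 0`, `η > 0` and `C ∈ ℝ` there exists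
`δ ∈ (0,1)` with `∫_{r₀}^{r₀+η} (G')⁻¹((1−δ)^{d−1} r₀^{d−1}/r^{d−1}) dr ≥ C`. -/
theorem stmt_15
    (d : ℕ) (hd : 2 ≤ d)
    (G G' G'' : ℝ → ℝ)
    (hder1 : ∀ s ∈ Ioi (0:ℝ), HasDerivAt G (G' s) s)
    (hder2 : ∀ s ∈ Ioi (0:ℝ), HasDerivAt G' (G'' s) s)
    (hG''cont : ContinuousOn G'' (Ioi 0))
    (hG''pos : ∀ s ∈ Ioi (0:ℝ), 0 < G'' s)
    (hG'0 : Tendsto G' (nhdsWithin 0 (Ioi 0)) (nhds 0))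
    (hG'1 : Tendsto G' atTop (nhds 1))
    (hA2 : (∫⁻ t in Ioi (1:ℝ), ENNReal.ofReal (t * G'' t)) = ⊤)
    (Ginv : ℝ → ℝ) (hGinv0 : Ginv 0 = 0)
    (hGinv : ∀ s ∈ Ioi (0:ℝ), Ginv (G' s) = s)
    (hGinv' : ∀ y ∈ Ioo (0:ℝ) 1, G' (Ginv y) = y ∧ 0 < Ginv y)
    (hGinvmono : StrictMonoOn Ginv (Ico 0 1)) (hGinvcont : ContinuousOn Ginv (Ico 0 1)) :
    ∀ r₀ : ℝ, 0 < r₀ → ∀ η : ℝ, 0 < η → ∀ C : ℝ,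
      ∃ δ : ℝ, 0 < δ ∧ δ < 1 ∧
        C ≤ ∫ r in r₀..(r₀ + η), Ginv ((1 - δ) ^ (d - 1) * r₀ ^ (d - 1) / r ^ (d - 1)) := by
  intro r₀ hr₀ η hη C
  have hn : 0 < d - 1 := by omega
  have hn' : (0 : ℝ) < (d - 1 : ℕ) := Nat.cast_pos.2 hn
  set n := d - 1
  have hmono : StrictMonoOn G' (Ioi 0) := strictMonoOn_Ioi_of_hasDerivAt_pos hder2 hG''pos
  have hIoo : ∀ s, 0 < s → G' s ∈ Ioo (0 : ℝ) 1 := fun s hs =>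
    hmono.mem_Ioo_of_tendsto hG'0 hG'1 hs
  obtain ⟨κ, hκ, hκ1, hκη⟩ : ∃ κ : ℝ, 0 < κ ∧ κ < 1 ∧ r₀ * κ / n ≤ η := by
    refine ⟨min (1 / 2) (η * n / r₀), by positivity,
      (min_le_left _ _).trans_lt (by norm_num), ?_⟩
    calc r₀ * min (1 / 2) (η * n / r₀) / n ≤ r₀ * (η * n / r₀) / n := by
          gcongr
          exact min_le_right _ _
      _ = η := by field_simp
  obtain ⟨hGS, hS⟩ := hGinv' (1 - κ) ⟨by linarith, by linarith⟩
  set S := Ginv (1 - κ)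
  obtain ⟨T, hST, hT⟩ := exists_le_intervalIntegral_of_lintegral_eq_top
    (continuousOn_id.mul hG''cont) (fun t ht => mul_nonneg (le_of_lt ht) (hG''pos t ht).le)
    hA2 hS (C * n / r₀)
  have hT0 : 0 < T := hS.trans hST
  have hq := hIoo T hT0
  have hpos : ∀ t ∈ uIcc S T, t ∈ Ioi (0 : ℝ) := fun t ht => by
    rw [uIcc_of_le hST.le] at ht
    exact hS.trans_le ht.1
  have hsub : ∫ t in S..T, t * G'' t = ∫ y in (1 - κ)..(G' T), Ginv y := by
    rw [← hGS, ← intervalIntegral.integral_comp_mul_deriv' (fun t ht => hder2 t (hpos t ht))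
      (hG''cont.mono hpos) (hGinvcont.mono ?_)]
    · exact intervalIntegral.integral_congr fun t ht => by simp [hGinv t (hpos t ht)]
    · rintro _ ⟨t, ht, rfl⟩
      exact Ioo_subset_Ico_self (hIoo t (hpos t ht))
  have hroot : (G' T ^ (n⁻¹ : ℝ)) ^ n = G' T := Real.rpow_inv_natCast_pow hq.1.le hn.ne'
  refine ⟨1 - G' T ^ (n⁻¹ : ℝ), sub_pos.2 (Real.rpow_lt_one hq.1.le hq.2 (by positivity)),
    sub_lt_self _ (Real.rpow_pos_of_pos hq.1 _), ?_⟩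
  rw [sub_sub_cancel, hroot]
  calc C = r₀ / n * (C * n / r₀) := by field_simp
    _ ≤ r₀ / n * ∫ y in (1 - κ)..(G' T), Ginv y := by
        rw [← hsub]
        gcongr
        exact hT
    _ ≤ _ := mul_integral_le_integral_comp_div_pow hGinvmono.monotoneOn hGinvcont hGinv0.ge hn
        hr₀ hκ hκ1 hκη (hGS ▸ (hmono hS hT0 hST).le) hq.2
end
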